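/- arXiv:1601.03227 — 2 statements merged into one kernel-verified Lean document; each statement's English description precedes it below -/
import Mathlib

section
/- Let A be a polynomially cyclic algebra over a finite field K with Gal(A/K) = ⟨ν⟩ of order n, let ρ_n be a primitive n-th root of unity over K, and let χ, χ': Gal(A/K) → K[ρ_n]^* be multiplicative characters. Then for every α ∈ A such that (χ·χ', α) is invertible in A_{ρ_n}, the quotient (χ, α)·(χ', α)/(χ·χ', α) lies in K[ρ_n] (viewed inside A_{ρ_n}). -/
open Polynomial

/-- `iterComp C m` is the `m`-fold composition `C^{(m)}` of `C` with itself,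
with `C^{(0)} = X`. -/
noncomputable def iterComp {K : Type*} [CommRing K] (C : K[X]) : ℕ → K[X]
  | 0 => X
  | m + 1 => (iterComp C m).comp C

/-- `f` is a cyclic polynomial with cyclicity polynomial `C`:
`f(C(X)) ≡ 0 mod f(X)`, `C^{(n)}(X) - X ≡ 0 mod f(X)` where `n = deg f`, and
`gcd(C^{(m)}(X) - X, f(X)) = 1` for `1 ≤ m < n`. -/
def IsCyclicPolyWith {K : Type*} [Field K] (f C : K[X]) : Prop :=
  f ∣ f.comp C ∧ f ∣ (iterComp C f.natDegree - X) ∧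
    ∀ m : ℕ, 1 ≤ m → m < f.natDegree → IsCoprime (iterComp C m - X) f



theorem aux_iter {K : Type*} [Field K] (f C : K[X])
    (ν : AdjoinRoot f ≃ₐ[K] AdjoinRoot f)
    (hν : ν (AdjoinRoot.root f) = aeval (AdjoinRoot.root f) C) (m : ℕ) :
    (ν ^ m) (AdjoinRoot.root f) = aeval (AdjoinRoot.root f) (iterComp C m) := by
  induction m with
  | zero => simp [iterComp]
  | succ m ih =>
    rw [pow_succ', AlgEquiv.mul_apply, ih, iterComp, aeval_comp, ← hν]
    exact (aeval_algHom_apply (ν : AdjoinRoot f →ₐ[K] AdjoinRoot f) _ _).symm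

theorem aux_unit {K : Type*} [Field K] (f C : K[X]) (hcyc : IsCyclicPolyWith f C)
    (ν : AdjoinRoot f ≃ₐ[K] AdjoinRoot f)
    (hν : ν (AdjoinRoot.root f) = aeval (AdjoinRoot.root f) C) (i j : ℕ) (hij : i < j)
    (hj : j < f.natDegree) :
    IsUnit ((ν ^ j) (AdjoinRoot.root f) - (ν ^ i) (AdjoinRoot.root f)) := by
  obtain ⟨m, rfl⟩ := Nat.exists_eq_add_of_lt hij
  have h := hcyc.2.2 (m + 1) (by omega) (by omega)
  obtain ⟨p, q, hpq⟩ := h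
  have h1 : IsUnit (aeval (AdjoinRoot.root f) (iterComp C (m + 1) - X)) := by
    have := congrArg (aeval (AdjoinRoot.root f)) hpq
    simp only [map_add, map_mul, map_one, show aeval (AdjoinRoot.root f) f = 0 by
      rw [AdjoinRoot.aeval_eq, AdjoinRoot.mk_self], mul_zero,
      add_zero] at this
    exact IsUnit.of_mul_eq_one_right _ this
  rw [map_sub, aeval_X, ← aux_iter f C ν hν] at h1
  have h2 := h1.map (ν ^ i)
  rwa [map_sub, ← AlgEquiv.mul_apply, ← pow_add, ← add_assoc] at h2

open scoped TensorProduct in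
theorem aux_fixed {K L : Type*} [Field K] [Field L] [Algebra K L]
    (f C : K[X]) (hn : 0 < f.natDegree) (hcyc : IsCyclicPolyWith f C)
    (ν : AdjoinRoot f ≃ₐ[K] AdjoinRoot f)
    (hν : ν (AdjoinRoot.root f) = aeval (AdjoinRoot.root f) C)
    (w : L ⊗[K] AdjoinRoot f)
    (hw : Algebra.TensorProduct.map (AlgHom.id L L) (ν : AdjoinRoot f →ₐ[K] AdjoinRoot f) w = w) :
    ∃ l : L, w = l ⊗ₜ[K] (1 : AdjoinRoot f) := by
  have hf : f ≠ 0 := by rintro rfl; simp at hn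
  set n := f.natDegree with hnd
  let b := Algebra.TensorProduct.basis L (AdjoinRoot.powerBasisAux hf)
  have hb : ∀ j, b j = (1 : L) ⊗ₜ[K] ((AdjoinRoot.root f) ^ (j : ℕ)) := by
    intro j
    have := (AdjoinRoot.powerBasis hf).basis_eq_pow j
    simp only [AdjoinRoot.powerBasis_gen] at this
    rw [← this]
    exact Algebra.TensorProduct.basis_apply _ _
  let v : Fin n → L ⊗[K] AdjoinRoot f := fun i => 1 ⊗ₜ (ν ^ (i : ℕ)) (AdjoinRoot.root f)
  have hV : IsUnit (Matrix.vandermonde v) := by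
    rw [Matrix.isUnit_iff_isUnit_det, Matrix.det_vandermonde]
    refine IsUnit.prod_iff.2 fun i _ => IsUnit.prod_iff.2 fun j hj => ?_
    have := aux_unit f C hcyc ν hν i j (by simpa using hj) j.2
    simp only [v, ← TensorProduct.tmul_sub]
    exact this.map (Algebra.TensorProduct.includeRight : AdjoinRoot f →ₐ[K] L ⊗[K] AdjoinRoot f)
  have hw' : ∀ i : ℕ, ∑ j, (b.repr w j ⊗ₜ[K] (((ν ^ i) (AdjoinRoot.root f)) ^ (j : ℕ))) = w := by
    intro i
    induction i with
    | zero =>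
      conv_rhs => rw [← b.sum_repr w]
      refine Finset.sum_congr rfl fun j _ => ?_
      rw [hb, TensorProduct.smul_tmul']
      simp
    | succ i ih =>
      conv_rhs => rw [← hw, ← ih, map_sum]
      refine Finset.sum_congr rfl fun j _ => ?_
      simp [pow_succ' ν]
  have key : (Matrix.vandermonde v).mulVec (fun j => b.repr w j ⊗ₜ[K] (1 : AdjoinRoot f)) =
      (Matrix.vandermonde v).mulVec (Pi.single (⟨0, hn⟩ : Fin n) w) := by
    ext i
    rw [Matrix.mulVec_single]
    simp only [Matrix.mulVec, dotProduct, Matrix.vandermonde_apply, v,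
      Algebra.TensorProduct.tmul_pow, Algebra.TensorProduct.tmul_mul_tmul, one_pow, one_mul, mul_one]
    simpa [Matrix.vandermonde_apply] using hw' i
  have := Matrix.mulVec_injective_of_isUnit hV key
  have h0 := congrFun this ⟨0, hn⟩
  simp only [Pi.single_eq_same] at h0
  exact ⟨_, h0.symm⟩

open scoped TensorProduct in
theorem aux_shift {K L A : Type*} [Field K] [Field L] [Algebra K L] [CommRing A] [Algebra K A]
    (n : ℕ) (ν : A ≃ₐ[K] A) (hν : ν ^ n = 1) (c : L) (hc : c ^ n = 1) (a : A) :
    (c ⊗ₜ[K] (1 : A)) * Algebra.TensorProduct.map (AlgHom.id L L) (ν : A →ₐ[K] A)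
      (∑ i ∈ Finset.range n, (c ^ (i + 1)) ⊗ₜ[K] ((ν ^ (i + 1)) a)) =
      ∑ i ∈ Finset.range n, (c ^ (i + 1)) ⊗ₜ[K] ((ν ^ (i + 1)) a) := by
  have h1 := Finset.sum_range_succ (fun i => (c ^ (i + 1)) ⊗ₜ[K] ((ν ^ (i + 1)) a)) n
  rw [Finset.sum_range_succ'] at h1
  have h2 : (c ^ (n + 1)) ⊗ₜ[K] ((ν ^ (n + 1)) a) = (c ^ (0 + 1)) ⊗ₜ[K] ((ν ^ (0 + 1)) a) := by
    simp [pow_succ, hc, hν]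
  rw [h2] at h1
  rw [map_sum, Finset.mul_sum]
  refine Eq.trans ?_ (add_right_cancel h1)
  refine Finset.sum_congr rfl fun i _ => ?_
  rw [Algebra.TensorProduct.map_tmul, Algebra.TensorProduct.tmul_mul_tmul, pow_succ' c (i + 1),
    pow_succ' ν (i + 1)]
  simp

open scoped TensorProduct in
theorem stmt_10 {K L : Type*} [Field K] [Fintype K] [Field L] [Algebra K L]
    (f C : K[X]) (n : ℕ) (hn : f.natDegree = n) (hcyc : IsCyclicPolyWith f C)
    (ν : AdjoinRoot f ≃ₐ[K] AdjoinRoot f)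
    (hν : ν (AdjoinRoot.root f) = aeval (AdjoinRoot.root f) C)
    (hord : orderOf ν = n)
    (ρ : L) (hρ : IsPrimitiveRoot ρ n) (hL : Algebra.adjoin K {ρ} = ⊤)
    (χ χ' : ↥(Subgroup.zpowers ν) →* Lˣ) (a : AdjoinRoot f)
    (hunit : IsUnit (∑ i ∈ Finset.range n,
      ((((χ * χ') ⟨ν, Subgroup.mem_zpowers ν⟩ : Lˣ) : L) ^ (i + 1)) ⊗ₜ[K] ((ν ^ (i + 1)) a))) :
    ∃ l : L,
      (∑ i ∈ Finset.range n,
          (((χ ⟨ν, Subgroup.mem_zpowers ν⟩ : Lˣ) : L) ^ (i + 1)) ⊗ₜ[K] ((ν ^ (i + 1)) a)) *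
        (∑ i ∈ Finset.range n,
          (((χ' ⟨ν, Subgroup.mem_zpowers ν⟩ : Lˣ) : L) ^ (i + 1)) ⊗ₜ[K] ((ν ^ (i + 1)) a))
      = (l ⊗ₜ[K] (1 : AdjoinRoot f)) *
        ∑ i ∈ Finset.range n,
          ((((χ * χ') ⟨ν, Subgroup.mem_zpowers ν⟩ : Lˣ) : L) ^ (i + 1)) ⊗ₜ[K] ((ν ^ (i + 1)) a) := by
  rcases Nat.eq_zero_or_pos n with h0 | hpos
  · subst h0
    exact ⟨0, by simp⟩
  have hνn : ν ^ n = 1 := by rw [← hord]; exact pow_orderOf_eq_one ν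
  have hχ : ∀ ψ : ↥(Subgroup.zpowers ν) →* Lˣ,
      ((ψ ⟨ν, Subgroup.mem_zpowers ν⟩ : Lˣ) : L) ^ n = 1 := by
    intro ψ
    rw [← Units.val_pow_eq_pow_val, ← map_pow]
    have : (⟨ν, Subgroup.mem_zpowers ν⟩ : ↥(Subgroup.zpowers ν)) ^ n = 1 := Subtype.ext hνn
    rw [this]; simp
  have e1 := aux_shift n ν hνn _ (hχ χ) a
  have e2 := aux_shift n ν hνn _ (hχ χ') a
  have e3 := aux_shift n ν hνn _ (hχ (χ * χ')) a
  have hcc : (((χ * χ') ⟨ν, Subgroup.mem_zpowers ν⟩ : Lˣ) : L) ⊗ₜ[K] (1 : AdjoinRoot f) =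
      (((χ ⟨ν, Subgroup.mem_zpowers ν⟩ : Lˣ) : L) ⊗ₜ[K] (1 : AdjoinRoot f)) *
      (((χ' ⟨ν, Subgroup.mem_zpowers ν⟩ : Lˣ) : L) ⊗ₜ[K] (1 : AdjoinRoot f)) := by
    simp
  rw [hcc] at e3
  generalize (∑ i ∈ Finset.range n,
      ((((χ * χ') ⟨ν, Subgroup.mem_zpowers ν⟩ : Lˣ) : L) ^ (i + 1)) ⊗ₜ[K] ((ν ^ (i + 1)) a)) = S at *
  generalize (∑ i ∈ Finset.range n,
      (((χ ⟨ν, Subgroup.mem_zpowers ν⟩ : Lˣ) : L) ^ (i + 1)) ⊗ₜ[K] ((ν ^ (i + 1)) a)) = S1 at *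
  generalize (∑ i ∈ Finset.range n,
      (((χ' ⟨ν, Subgroup.mem_zpowers ν⟩ : Lˣ) : L) ^ (i + 1)) ⊗ₜ[K] ((ν ^ (i + 1)) a)) = S2 at *
  obtain ⟨T, hT⟩ := hunit.exists_left_inv
  have hwS : (S1 * S2 * T) * S = S1 * S2 := by rw [mul_assoc, hT, mul_one]
  obtain ⟨l, hl⟩ := aux_fixed (L := L) f C (hn ▸ hpos) hcyc ν hν (S1 * S2 * T) (by
    apply hunit.mul_right_cancel
    rw [hwS]
    have h := congrArg (Algebra.TensorProduct.map (AlgHom.id L L)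
      (ν : AdjoinRoot f →ₐ[K] AdjoinRoot f)) hwS
    rw [map_mul _ (S1 * S2 * T) S, map_mul _ S1 S2] at h
    conv_lhs => rw [← e3]
    conv_rhs => rw [← e1, ← e2]
    rw [mul_left_comm, h]
    ring)
  exact ⟨l, by rw [← hl, hwS]⟩
end

section
/- Let A_1 = K[X]/(f_1(X)) and A_2 = K[X]/(f_2(X)) be isomorphic polynomially cyclic algebras over a finite field K, both of degree n, with Galois groups G_i = ⟨ν_i⟩ and generators α_i = X mod f_i(X). Suppose φ: A_1 → A_2 is a K-algebra isomorphism satisfying φ ∘ ν_1 = ν_2 ∘ φ and φ(α_1) = Σ_{i=1}^{n} a_i ν_2^i(α_2) with a_i ∈ K. Let ρ_n be a primitive n-th root of unity over K and let χ_1: G_1 → ⟨ρ_n⟩, χ_2: G_2 → ⟨ρ_n⟩ be characters with χ_1(ν_1) = χ_2(ν_2). Then φ((χ_1, α_1)) = (χ_2, α_2) · β(χ_2), where β(χ_2) = Σ_{i=1}^{n} a_i χ_2(ν_2^i)^{-1} ∈ K[ρ_n] and φ is extended to A_{1,ρ_n} → A_{2,ρ_n} by acting as the identity on ρ_n. -/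
open Polynomial

theorem sum_shift_aux {M : Type*} [AddCommMonoid M] (g : ℕ → M) (n : ℕ)
    (hg : ∀ j, g (j + n) = g j) (k : ℕ) :
    ∑ j ∈ Finset.range n, g (j + k) = ∑ j ∈ Finset.range n, g j := by
  induction k with
  | zero => simp
  | succ k ih =>
    rw [← ih]
    cases n with
    | zero => simp
    | succ m =>
      rw [Finset.sum_range_succ, Finset.sum_range_succ' (fun j => g (j + k))]
      congr 1
      · refine Finset.sum_congr rfl fun j _ => ?_
        congr 1
        omega
      · rw [← hg (0 + k)]
        congr 1
        omega

open scoped TensorProduct in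
theorem stmt_12 {K L : Type*} [Field K] [Fintype K] [Field L] [Algebra K L]
    (f₁ f₂ C₁ C₂ : K[X]) (n : ℕ) (hn₁ : f₁.natDegree = n) (hn₂ : f₂.natDegree = n)
    (h₁ : IsCyclicPolyWith f₁ C₁) (h₂ : IsCyclicPolyWith f₂ C₂)
    (ν₁ : AdjoinRoot f₁ ≃ₐ[K] AdjoinRoot f₁) (ν₂ : AdjoinRoot f₂ ≃ₐ[K] AdjoinRoot f₂)
    (hν₁ : ν₁ (AdjoinRoot.root f₁) = aeval (AdjoinRoot.root f₁) C₁)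
    (hν₂ : ν₂ (AdjoinRoot.root f₂) = aeval (AdjoinRoot.root f₂) C₂)
    (ho₁ : orderOf ν₁ = n) (ho₂ : orderOf ν₂ = n)
    (φ : AdjoinRoot f₁ ≃ₐ[K] AdjoinRoot f₂)
    (hcomm : ∀ x : AdjoinRoot f₁, φ (ν₁ x) = ν₂ (φ x))
    (a : ℕ → K)
    (hφroot : φ (AdjoinRoot.root f₁) =
      ∑ i ∈ Finset.range n, a (i + 1) • ((ν₂ ^ (i + 1)) (AdjoinRoot.root f₂)))
    (ρ : L) (hρ : IsPrimitiveRoot ρ n) (hL : Algebra.adjoin K {ρ} = ⊤)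
    (χ₁ : ↥(Subgroup.zpowers ν₁) →* Lˣ) (χ₂ : ↥(Subgroup.zpowers ν₂) →* Lˣ)
    (hval₁ : ∀ g, ((χ₁ g : Lˣ) : L) ∈ Submonoid.powers ρ)
    (hval₂ : ∀ g, ((χ₂ g : Lˣ) : L) ∈ Submonoid.powers ρ)
    (hχ : χ₁ ⟨ν₁, Subgroup.mem_zpowers ν₁⟩ = χ₂ ⟨ν₂, Subgroup.mem_zpowers ν₂⟩) :
    Algebra.TensorProduct.map (AlgHom.id K L) φ.toAlgHom
      (∑ i ∈ Finset.range n,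
        (((χ₁ ⟨ν₁, Subgroup.mem_zpowers ν₁⟩ : Lˣ) : L) ^ (i + 1)) ⊗ₜ[K]
          ((ν₁ ^ (i + 1)) (AdjoinRoot.root f₁)))
    = (∑ i ∈ Finset.range n,
        (((χ₂ ⟨ν₂, Subgroup.mem_zpowers ν₂⟩ : Lˣ) : L) ^ (i + 1)) ⊗ₜ[K]
          ((ν₂ ^ (i + 1)) (AdjoinRoot.root f₂)))
      * ((∑ i ∈ Finset.range n,
            a (i + 1) • (((χ₂ (⟨ν₂, Subgroup.mem_zpowers ν₂⟩ ^ (i + 1)))⁻¹ : Lˣ) : L))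
          ⊗ₜ[K] (1 : AdjoinRoot f₂)) := by
  have hpow : ∀ (k : ℕ) (x : AdjoinRoot f₁), φ ((ν₁ ^ k) x) = (ν₂ ^ k) (φ x) := by
    intro k
    induction k with
    | zero => intro x; simp
    | succ k ih =>
      intro x
      rw [pow_succ, pow_succ, AlgEquiv.mul_apply, AlgEquiv.mul_apply, ih, hcomm]
  have hνn : ν₂ ^ n = 1 := by rw [← ho₂]; exact pow_orderOf_eq_one ν₂
  have hun : (χ₂ ⟨ν₂, Subgroup.mem_zpowers ν₂⟩) ^ n = 1 := by
    rw [← map_pow]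
    have : (⟨ν₂, Subgroup.mem_zpowers ν₂⟩ : Subgroup.zpowers ν₂) ^ n = 1 :=
      Subtype.ext (by simpa using hνn)
    rw [this, map_one]
  rw [hχ]
  simp only [map_pow]
  generalize χ₂ ⟨ν₂, Subgroup.mem_zpowers ν₂⟩ = u at hun ⊢
  have hun' : (u : L) ^ n = 1 := by
    rw [← Units.val_pow_eq_pow_val, hun, Units.val_one]
  rw [map_sum, TensorProduct.sum_tmul, Finset.mul_sum]
  have key : ∀ j : ℕ, Algebra.TensorProduct.map (AlgHom.id K L) φ.toAlgHom
      (((u : L) ^ (j + 1)) ⊗ₜ[K] ((ν₁ ^ (j + 1)) (AdjoinRoot.root f₁)))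
      = ∑ i ∈ Finset.range n, a (i + 1) • (((u : L) ^ (j + 1)) ⊗ₜ[K]
        ((ν₂ ^ (j + 1 + (i + 1))) (AdjoinRoot.root f₂))) := by
    intro j
    rw [Algebra.TensorProduct.map_tmul]
    have : φ.toAlgHom ((ν₁ ^ (j + 1)) (AdjoinRoot.root f₁)) =
        φ ((ν₁ ^ (j + 1)) (AdjoinRoot.root f₁)) := rfl
    rw [this, hpow, hφroot, map_sum, TensorProduct.tmul_sum]
    refine Finset.sum_congr rfl fun i _ => ?_
    rw [map_smul, TensorProduct.tmul_smul, pow_add ν₂ (j + 1) (i + 1), AlgEquiv.mul_apply]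
    rfl
  rw [Finset.sum_congr rfl fun j _ => key j, Finset.sum_comm]
  refine Finset.sum_congr rfl fun i _ => ?_
  rw [← sum_shift_aux (fun j => ((u : L) ^ (j + 1)) ⊗ₜ[K]
    ((ν₂ ^ (j + 1)) (AdjoinRoot.root f₂))) n ?_ (i + 1), Finset.sum_mul]
  · refine Finset.sum_congr rfl fun j _ => ?_
    rw [Algebra.TensorProduct.tmul_mul_tmul, mul_one, mul_smul_comm, ← TensorProduct.smul_tmul']
    have e : (u : L) ^ (j + (i + 1) + 1) * ((u ^ (i + 1))⁻¹ : Lˣ) = (u : L) ^ (j + 1) := by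
      rw [show j + (i + 1) + 1 = (j + 1) + (i + 1) by omega, pow_add, mul_assoc,
        ← Units.val_pow_eq_pow_val u (i + 1), Units.mul_inv, mul_one]
    rw [e, show j + (i + 1) + 1 = (j + 1) + (i + 1) by omega]
  · intro j
    simp only [show j + n + 1 = (j + 1) + n by omega, pow_add _ (j + 1) n, hun', hνn, mul_one]
end
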